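/- Let n ≥ 4, let L be a Cartan type Lie superalgebra over ℂ (one of W(n), S(n), S̃(n) for n even, or H(n) for n > 4) with top ℤ-degree ξ_L (ξ_W = n−1, ξ_S = ξ_{S̃} = n−2, ξ_H = n−3), let f ∈ BDer(L) be a homogeneous super-biderivation, and let φ_f, ψ_f : L → L' be linear maps with f(x,y) = [φ_f(x), y] = [x, ψ_f(y)] for all x, y ∈ L. If φ_f vanishes on L_{−1} ⊕ L_{ξ_L} or ψ_f vanishes on L_{−1} ⊕ L_{ξ_L}, then f is the zero map. -/

import Mathlib

open scoped BigOperators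

noncomputable section

namespace CartanSuper

/-- Coordinates of the exterior algebra `Λ(n)` with respect to the monomial basis
`{x_S : S ⊆ {1,…,n}}`. -/
abbrev Lambda (n : ℕ) := Finset (Fin n) → ℂ

/-- Endomorphism algebra of `Λ(n)`. -/
abbrev E (n : ℕ) := Module.End ℂ (Lambda n)

variable (n : ℕ)

/-- `(−1)^k`. -/
def msign (k : ℕ) : ℂ := (-1 : ℂ) ^ k

/-- The basis monomial `x_S = x_{i₁}⋯x_{i_k}` (indices in increasing order). -/
def mono (S : Finset (Fin n)) : Lambda n := fun T => if T = S then 1 else 0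

/-- Number of inversions between `S` and `T`. -/
def inversions (S T : Finset (Fin n)) : ℕ := ((S ×ˢ T).filter fun p => p.2 < p.1).card

/-- The multiplication of `Λ(n)` in coordinates:
`x_S · x_T = (−1)^{inversions} x_{S ∪ T}` for disjoint `S, T` and `0` otherwise. -/
def lmulFun (f g : Lambda n) : Lambda n :=
  fun U => ∑ S ∈ U.powerset, msign (inversions n S (U \ S)) * f S * g (U \ S)

/-- Left multiplication by an element of `Λ(n)`, as a linear map `Λ(n) →ₗ End Λ(n)`. -/
def mulOp : Lambda n →ₗ[ℂ] E n where
  toFun f :=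
    { toFun := lmulFun n f
      map_add' := by
        intro g h; funext U
        simp [lmulFun, mul_add, Finset.sum_add_distrib]
      map_smul' := by
        intro c g; funext U
        simp only [lmulFun, Pi.smul_apply, smul_eq_mul, RingHom.id_apply, Finset.mul_sum]
        exact Finset.sum_congr rfl (by intros; ring) }
  map_add' := by
    intro f g; apply LinearMap.ext; intro h; funext U
    show lmulFun n (f + g) h U = lmulFun n f h U + lmulFun n g h U
    simp only [lmulFun]
    rw [← Finset.sum_add_distrib]
    exact Finset.sum_congr rfl (by intros; simp [Pi.add_apply]; ring)
  map_smul' := by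
    intro c f; apply LinearMap.ext; intro h; funext U
    show lmulFun n (c • f) h U = (c • lmulFun n f h) U
    simp only [lmulFun, Pi.smul_apply, smul_eq_mul, Finset.mul_sum]
    exact Finset.sum_congr rfl (by intros; ring)

/-- The superderivation `∂_i` of `Λ(n)`, in coordinates. -/
def pd (i : Fin n) : E n where
  toFun f := fun S =>
    if i ∈ S then 0 else msign (S.filter (· < i)).card * f (insert i S)
  map_add' := by
    intro f g; funext S; by_cases h : i ∈ S <;> simp [h, mul_add]
  map_smul' := by
    intro c f; funext S; by_cases h : i ∈ S <;> simp [h] <;> ring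

/-- The parity operator `σ` of `Λ(n)`: `σ(x_S) = (−1)^{|S|} x_S`. -/
def par : E n where
  toFun f := fun S => msign S.card * f S
  map_add' := by intro f g; funext S; simp [mul_add]
  map_smul' := by intro c f; funext S; simp; ring

/-- The super-commutator `[D,F] = D∘F − (−1)^{|D||F|} F∘D`, extended bilinearly to all of
`End Λ(n)` using the parity operator `σ`
(for homogeneous `D`, `σ∘D∘σ = (−1)^{|D|} D`). -/
def sbFun (D F : E n) : E n :=
  D * F - (2:ℂ)⁻¹ • ((F + par n * F * par n) * D + (F - par n * F * par n) * (par n * D * par n))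

/-- The super-commutator as a bilinear map. -/
def sbL : E n →ₗ[ℂ] E n →ₗ[ℂ] E n :=
  LinearMap.mk₂ ℂ (sbFun n)
    (fun D D' F => by
      simp only [sbFun, add_mul, sub_mul, mul_add, mul_sub, smul_mul_assoc, mul_smul_comm,
        smul_add, smul_sub]
      module)
    (fun c D F => by
      simp only [sbFun, add_mul, sub_mul, mul_add, mul_sub, smul_mul_assoc, mul_smul_comm,
        smul_add, smul_sub]
      module)
    (fun D F F' => by
      simp only [sbFun, add_mul, sub_mul, mul_add, mul_sub, smul_mul_assoc, mul_smul_comm,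
        smul_add, smul_sub]
      module)
    (fun c D F => by
      simp only [sbFun, add_mul, sub_mul, mul_add, mul_sub, smul_mul_assoc, mul_smul_comm,
        smul_add, smul_sub]
      module)

/-- Shorthand for the super-commutator. -/
def sb (D F : E n) : E n := sbL n D F

/-- The ℤ₂-homogeneous component of `Λ(n)` of parity `p`. -/
def lpar (p : ZMod 2) : Submodule ℂ (Lambda n) where
  carrier := {f | ∀ S : Finset (Fin n), (S.card : ZMod 2) ≠ p → f S = 0}
  add_mem' := by intro f g hf hg S hS; simp [Pi.add_apply, hf S hS, hg S hS]
  zero_mem' := by intro S hS; rfl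
  smul_mem' := by intro c f hf S hS; simp [Pi.smul_apply, hf S hS]

/-- The ℤ-homogeneous component of `Λ(n)` of degree `m` (zero unless `0 ≤ m ≤ n`). -/
def ldeg (m : ℤ) : Submodule ℂ (Lambda n) where
  carrier := {f | ∀ S : Finset (Fin n), (S.card : ℤ) ≠ m → f S = 0}
  add_mem' := by intro f g hf hg S hS; simp [Pi.add_apply, hf S hS, hg S hS]
  zero_mem' := by intro S hS; rfl
  smul_mem' := by intro c f hf S hS; simp [Pi.smul_apply, hf S hS]

/-- Endomorphisms of `Λ(n)` that are ℤ₂-homogeneous of parity `p`. -/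
def epar (p : ZMod 2) : Submodule ℂ (E n) where
  carrier := {D | ∀ (q : ZMod 2), ∀ f ∈ lpar n q, D f ∈ lpar n (q + p)}
  add_mem' := by
    intro D F hD hF q f hf
    simpa [LinearMap.add_apply] using (lpar n (q + p)).add_mem (hD q f hf) (hF q f hf)
  zero_mem' := by intro q f hf; simpa using (lpar n (q + p)).zero_mem
  smul_mem' := by
    intro c D hD q f hf
    simpa [LinearMap.smul_apply] using (lpar n (q + p)).smul_mem c (hD q f hf)

/-- Endomorphisms of `Λ(n)` that are ℤ-homogeneous of degree `d`. -/
def edeg (d : ℤ) : Submodule ℂ (E n) where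
  carrier := {D | ∀ (m : ℤ), ∀ f ∈ ldeg n m, D f ∈ ldeg n (m + d)}
  add_mem' := by
    intro D F hD hF m f hf
    simpa [LinearMap.add_apply] using (ldeg n (m + d)).add_mem (hD m f hf) (hF m f hf)
  zero_mem' := by intro m f hf; simpa using (ldeg n (m + d)).zero_mem
  smul_mem' := by
    intro c D hD m f hf
    simpa [LinearMap.smul_apply] using (ldeg n (m + d)).smul_mem c (hD m f hf)

/-- The linear map `(f₁,…,f_n) ↦ ∑ᵢ fᵢ ∂ᵢ`. -/
def Wmap : (Fin n → Lambda n) →ₗ[ℂ] E n where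
  toFun F := ∑ i, mulOp n (F i) * pd n i
  map_add' := by
    intro F G
    simp only [Pi.add_apply, map_add, add_mul, Finset.sum_add_distrib]
  map_smul' := by
    intro c F
    simp only [RingHom.id_apply, Pi.smul_apply, map_smul, smul_mul_assoc, Finset.smul_sum]

/-- The divergence `(f₁,…,f_n) ↦ ∑ᵢ ∂ᵢ(fᵢ)`. -/
def divMap : (Fin n → Lambda n) →ₗ[ℂ] Lambda n where
  toFun F := ∑ i, pd n i (F i)
  map_add' := by
    intro F G
    simp only [Pi.add_apply, map_add, Finset.sum_add_distrib]
  map_smul' := by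
    intro c F
    simp only [RingHom.id_apply, Pi.smul_apply, map_smul, Finset.smul_sum]

/-- The Witt type Lie superalgebra `W(n) = {∑ fᵢ∂ᵢ : fᵢ ∈ Λ(n)}`. -/
def Wn : Submodule ℂ (E n) := LinearMap.range (Wmap n)

/-- Divergence-free coefficient tuples. -/
def divFree : Submodule ℂ (Fin n → Lambda n) := LinearMap.ker (divMap n)

/-- The special type Lie superalgebra `S(n) = {∑ fᵢ∂ᵢ : ∑ ∂ᵢ(fᵢ) = 0}`. -/
def Sn : Submodule ℂ (E n) := (divFree n).map (Wmap n)

/-- The top monomial `ω = x₁x₂⋯x_n`. -/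
def omegaTop : Lambda n := mono n Finset.univ

/-- `1 − x₁x₂⋯x_n`. -/
def oneM : Lambda n := mono n ∅ - omegaTop n

/-- Multiplication of every coefficient by `1 − x₁⋯x_n`. -/
def oneMScale : (Fin n → Lambda n) →ₗ[ℂ] (Fin n → Lambda n) :=
  LinearMap.pi fun i => (mulOp n (oneM n)) ∘ₗ LinearMap.proj i

/-- The Lie superalgebra `S̃(n) = {(1−x₁⋯x_n)∑ fᵢ∂ᵢ : ∑ ∂ᵢ(fᵢ) = 0}` (`n` even). -/
def Stn : Submodule ℂ (E n) := (divFree n).map (Wmap n ∘ₗ oneMScale n)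

/-- The conjugate index `i'`. -/
def cidx (i : Fin n) : Fin n :=
  ⟨if i.val < n / 2 then i.val + n / 2 else if i.val < 2 * (n / 2) then i.val - n / 2 else i.val,
   by have := i.isLt; split_ifs <;> omega⟩

/-- The linear map `f ↦ D_H(f) = (−1)^{|f|} ∑ᵢ ∂ᵢ(f)∂_{i'}` (the sign is implemented by the
parity operator `σ`, so that this is a single linear map agreeing with `D_H` on homogeneous
elements). -/
def DHmap : Lambda n →ₗ[ℂ] E n where
  toFun f := ∑ i, mulOp n (pd n i (par n f)) * pd n (cidx n i)
  map_add' := by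
    intro f g
    simp only [map_add, add_mul, Finset.sum_add_distrib]
  map_smul' := by
    intro c f
    simp only [RingHom.id_apply, map_smul, smul_mul_assoc, Finset.smul_sum]

/-- Evaluation of the top coefficient. -/
def evalTop : Lambda n →ₗ[ℂ] ℂ := LinearMap.proj Finset.univ

/-- The Hamiltonian Lie superalgebra `H(n) = {D_H(f) : f ∈ ⊕_{i=0}^{n−1} Λ(n)_i}`. -/
def Hn : Submodule ℂ (E n) := (LinearMap.ker (evalTop n)).map (DHmap n)

/-- `H̃(n) = {D_H(f) : f ∈ Λ(n)}`. -/
def HtN : Submodule ℂ (E n) := LinearMap.range (DHmap n)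

/-- The degree derivation `𝒞 = ∑ᵢ xᵢ∂ᵢ`. -/
def CC : E n := ∑ i, mulOp n (mono n {i}) * pd n i

/-- The span of the diagonal elements `xᵢ∂ᵢ`. -/
def diagSpan : Submodule ℂ (E n) :=
  Submodule.span ℂ (Set.range fun i : Fin n => mulOp n (mono n {i}) * pd n i)

/-- The four families of Cartan type Lie superalgebras. -/
inductive CT | W | S | St | H
deriving DecidableEq

/-- Validity of the parameter `n` for each family. -/
def CT.valid : CT → ℕ → Prop
  | .W, n => 4 ≤ n
  | .S, n => 4 ≤ n
  | .St, n => 4 ≤ n ∧ Even n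
  | .H, n => 4 < n

/-- The Cartan type Lie superalgebra `L` itself. -/
def CT.algebra : CT → (n : ℕ) → Submodule ℂ (E n)
  | .W, n => Wn n
  | .S, n => Sn n
  | .St, n => Stn n
  | .H, n => Hn n

/-- The extended algebra `L'`: `L' = L` for `W(n)` and `S̃(n)`, `L' = S(n) ⊕ ℂ𝒞` for `S(n)`,
and `L' = H̃(n) ⊕ ℂ𝒞` for `H(n)`. -/
def CT.prime : CT → (n : ℕ) → Submodule ℂ (E n)
  | .W, n => Wn n
  | .S, n => Sn n ⊔ Submodule.span ℂ {CC n}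
  | .St, n => Stn n
  | .H, n => HtN n ⊔ Submodule.span ℂ {CC n}

/-- The top degree `ξ_L` of the ℤ-grading. -/
def CT.xi : CT → (n : ℕ) → ℤ
  | .W, n => (n : ℤ) - 1
  | .S, n => (n : ℤ) - 2
  | .St, n => (n : ℤ) - 2
  | .H, n => (n : ℤ) - 3

/-- The ℤ-grading component `L_j = L ∩ W(n)_j`; for `S̃(n)` the component of degree `−1`
is `span{(1−x₁⋯x_n)∂ᵢ}` instead. -/
def CT.grade (t : CT) (n : ℕ) (j : ℤ) : Submodule ℂ (E n) :=
  match t with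
  | .St =>
      if j = -1 then
        Submodule.span ℂ (Set.range fun i : Fin n => mulOp n (oneM n) * pd n i)
      else Stn n ⊓ edeg n j
  | t => t.algebra n ⊓ edeg n j

/-- The ℤ-grading component `L'_j` of the extended algebra `L'`. -/
def CT.grade' (t : CT) (n : ℕ) (j : ℤ) : Submodule ℂ (E n) :=
  match t with
  | .St => CT.grade .St n j
  | t => t.prime n ⊓ edeg n j

/-- The standard Cartan subalgebra `H_L` of `L`: the part of the diagonal
`span{xᵢ∂ᵢ}` lying in `L`. -/
def CT.cartan (t : CT) (n : ℕ) : Submodule ℂ (E n) := t.algebra n ⊓ diagSpan n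

/-- The weight space of `M ⊆ End Λ(n)` of weight `μ ∈ H_L^*` under the adjoint action
of the standard Cartan subalgebra of `L`. -/
def wtsp (t : CT) (n : ℕ) (M : Submodule ℂ (E n)) (μ : Module.Dual ℂ (t.cartan n)) :
    Submodule ℂ (E n) where
  carrier := {x | x ∈ M ∧ ∀ h : t.cartan n, sbL n h x = μ h • x}
  add_mem' := by
    rintro x y ⟨hx, hx'⟩ ⟨hy, hy'⟩
    exact ⟨M.add_mem hx hy, fun h => by simp [map_add, hx' h, hy' h, smul_add]⟩
  zero_mem' := ⟨M.zero_mem, fun h => by simp⟩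
  smul_mem' := by
    rintro c x ⟨hx, hx'⟩
    exact ⟨M.smul_mem c hx, fun h => by simp [map_smul, hx' h, smul_comm c]⟩

/-- The set of roots of `M` with respect to the standard Cartan subalgebra of `L`:
the nonzero weights with nonzero weight space. -/
def CT.roots (t : CT) (n : ℕ) (M : Submodule ℂ (E n)) : Set (Module.Dual ℂ (t.cartan n)) :=
  {ε | ε ≠ 0 ∧ wtsp t n M ε ≠ ⊥}

/-- The sign `(−1)^p` for `p ∈ ℤ₂`. -/
def sgn (p : ZMod 2) : ℂ := (-1 : ℂ) ^ p.val

/-- `f` is a super-biderivation of `L` of ℤ₂-degree `pf`: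
a bilinear map with `f(L_α, L_β) ⊆ L_{α+β+pf}` satisfying
`f([x,y],z) = (−1)^{|x||f|}[x,f(y,z)] + (−1)^{|y||z|}[f(x,z),y]` and
`f(x,[y,z]) = [f(x,y),z] + (−1)^{(|f|+|x|)|y|}[y,f(x,z)]` for homogeneous `x,y,z ∈ L`.
(The bilinear map is given as a bilinear map on the ambient space `End Λ(n)`;
only its restriction to `L` is relevant.) -/
structure IsSuperBider (L : Submodule ℂ (E n)) (pf : ZMod 2)
    (f : E n →ₗ[ℂ] E n →ₗ[ℂ] E n) : Prop where
  maps : ∀ (α β : ZMod 2), ∀ x ∈ L ⊓ epar n α, ∀ y ∈ L ⊓ epar n β,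
    f x y ∈ L ⊓ epar n (α + β + pf)
  eq1 : ∀ (α β γ : ZMod 2), ∀ x ∈ L ⊓ epar n α, ∀ y ∈ L ⊓ epar n β, ∀ z ∈ L ⊓ epar n γ,
    f (sbL n x y) z = sgn (α * pf) • sbL n x (f y z) + sgn (β * γ) • sbL n (f x z) y
  eq2 : ∀ (α β γ : ZMod 2), ∀ x ∈ L ⊓ epar n α, ∀ y ∈ L ⊓ epar n β, ∀ z ∈ L ⊓ epar n γ,
    f x (sbL n y z) = sbL n (f x y) z + sgn ((pf + α) * β) • sbL n y (f x z)

/-- `D` is a superderivation of `L` of ℤ₂-degree `p`: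
`D(L_α) ⊆ L_{α+p}` and `D([x,y]) = [D(x),y] + (−1)^{|D||x|}[x,D(y)]` for homogeneous
`x, y ∈ L`. (Given as a linear map on the ambient space `End Λ(n)`.) -/
structure IsSuperDer (L : Submodule ℂ (E n)) (p : ZMod 2)
    (D : E n →ₗ[ℂ] E n) : Prop where
  maps : ∀ (α : ZMod 2), ∀ x ∈ L ⊓ epar n α, D x ∈ L ⊓ epar n (α + p)
  leib : ∀ (α β : ZMod 2), ∀ x ∈ L ⊓ epar n α, ∀ y ∈ L ⊓ epar n β,
    D (sbL n x y) = sbL n (D x) y + sgn (p * α) • sbL n x (D y)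

/-- `f ∈ BDer(L)_ε`: the super-biderivation `f` has weight `ε ∈ H_L^*`, i.e.
`f(L_η, L_ζ) ⊆ L_{ε+η+ζ}` for all weights `η, ζ`. -/
def CT.HasWeight (t : CT) (n : ℕ) (f : E n →ₗ[ℂ] E n →ₗ[ℂ] E n)
    (ε : Module.Dual ℂ (t.cartan n)) : Prop :=
  ∀ (η ζ : Module.Dual ℂ (t.cartan n)),
    ∀ x ∈ wtsp t n (t.algebra n) η, ∀ y ∈ wtsp t n (t.algebra n) ζ,
      f x y ∈ wtsp t n (t.algebra n) (ε + η + ζ)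

/-- `f ∈ BDer(L)_i`: the super-biderivation `f` has ℤ-degree `i`, i.e.
`f(L_j, L_k) ⊆ L_{i+j+k}` for all `j, k ∈ ℤ`. -/
def CT.HasDeg (t : CT) (n : ℕ) (f : E n →ₗ[ℂ] E n →ₗ[ℂ] E n) (i : ℤ) : Prop :=
  ∀ (j k : ℤ), ∀ x ∈ t.grade n j, ∀ y ∈ t.grade n k, f x y ∈ t.grade n (i + j + k)

/-! If `φ` kills `L_{-1} ⊕ L_ξ`, then `[X, ψ y] = [φ X, y] = 0` for all `X` in these two components,
so every `ψ y` supercentralizes them; if `ψ` kills them, so does every `φ x`, by super-skew-symmetry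
against the parity-homogeneous `X`. It remains to see that only `0` supercentralizes
`L_{-1} ⊕ L_ξ` in `W(n)`. Commuting with every `∂_i` makes the coefficients of `Z = ∑ c_k ∂_k`
constant. For each `i` there is `X ∈ L_ξ` sending some `x_k` to a nonzero multiple of a monomial
`x_T` with `i ∈ T`, so that `Z x_T` is proportional to `X (Z x_k) = c_k X 1 = 0`, which forces
`c_i = 0`. For `S̃(n)` the odd fields `(1 - x_1⋯x_n)∂_i` play both roles. -/

section Centralizers

variable {n}

/-! ### Monomials and parity -/

lemma eq_sum_smul_mono (a : Lambda n) : a = ∑ T, a T • mono n T := by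
  funext S
  simp [mono]

lemma hom_ext_mono {X Y : E n} (h : ∀ T, X (mono n T) = Y (mono n T)) : X = Y := by
  refine LinearMap.ext fun a => ?_
  rw [eq_sum_smul_mono a]
  simp only [map_sum, map_smul, h]

lemma msign_ne_zero (k : ℕ) : msign k ≠ 0 := pow_ne_zero k (neg_ne_zero.mpr one_ne_zero)

lemma zmod_two_cases (p : ZMod 2) : p = 0 ∨ p = 1 := by
  decide +revert

lemma sgn_zero : sgn 0 = 1 := pow_zero _

lemma sgn_one : sgn 1 = -1 := pow_one _

lemma sgn_ne_zero (p : ZMod 2) : sgn p ≠ 0 := pow_ne_zero _ (neg_ne_zero.mpr one_ne_zero)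

lemma sgn_mul_self (p : ZMod 2) : sgn p * sgn p = 1 := by
  rw [sgn, ← mul_pow]
  norm_num

lemma sgn_natCast (k : ℕ) : sgn (k : ZMod 2) = msign k := by
  rw [sgn, msign, ZMod.val_natCast, ← neg_one_pow_eq_pow_mod_two]

lemma sgn_add (p q : ZMod 2) : sgn (p + q) = sgn p * sgn q := by
  rw [← ZMod.natCast_zmod_val p, ← ZMod.natCast_zmod_val q, ← Nat.cast_add]
  simp only [sgn_natCast, msign, pow_add]

lemma mono_mem_ldeg (T : Finset (Fin n)) : mono n T ∈ ldeg n T.card := by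
  intro S hS
  exact if_neg fun hST => hS (by rw [hST])

lemma ldeg_le_lpar (m : ℤ) : ldeg n m ≤ lpar n m := by
  intro a ha S hS
  exact ha S fun hm => hS (by rw [← hm, Int.cast_natCast])

lemma mono_mem_lpar (T : Finset (Fin n)) : mono n T ∈ lpar n T.card := by
  simpa using ldeg_le_lpar _ (mono_mem_ldeg T)

lemma par_apply (a : Lambda n) (S : Finset (Fin n)) : par n a S = msign S.card * a S := rfl

lemma par_mul_par : par n * par n = 1 := by
  ext a S
  simp [par_apply, msign, ← mul_assoc, ← mul_pow]

lemma par_pow_apply (k : ℕ) (a : Lambda n) (S : Finset (Fin n)) :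
    (par n ^ k) a S = msign S.card ^ k * a S := by
  induction k with
  | zero => simp
  | succ k ih => rw [pow_succ', Module.End.mul_apply, par_apply, ih, pow_succ', mul_assoc]

lemma par_apply_of_mem_lpar {q : ZMod 2} {a : Lambda n} (ha : a ∈ lpar n q) :
    par n a = sgn q • a := by
  funext S
  rw [par_apply, Pi.smul_apply, smul_eq_mul]
  by_cases hS : (S.card : ZMod 2) = q
  · rw [← hS, sgn_natCast]
  · rw [ha S hS, mul_zero, mul_zero]

lemma par_pow_apply_of_mem_lpar {q : ZMod 2} {a : Lambda n} (ha : a ∈ lpar n q) (k : ℕ) :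
    (par n ^ k) a = sgn q ^ k • a := by
  induction k with
  | zero => simp
  | succ k ih =>
    rw [pow_succ', Module.End.mul_apply, ih, map_smul, par_apply_of_mem_lpar ha, smul_smul,
      pow_succ]

lemma par_conj_of_mem_epar {p : ZMod 2} {X : E n} (hX : X ∈ epar n p) :
    par n * X * par n = sgn p • X := by
  refine hom_ext_mono fun T => ?_
  have hT := mono_mem_lpar T
  simp only [Module.End.mul_apply, LinearMap.smul_apply]
  rw [par_apply_of_mem_lpar hT, map_smul, map_smul, par_apply_of_mem_lpar (hX _ _ hT), smul_smul,
    sgn_add, ← mul_assoc, sgn_mul_self, one_mul]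

lemma par_pow_mul_par_pow (k : ℕ) : par n ^ k * par n ^ k = 1 := by
  rw [← pow_add, ← two_mul, pow_mul, sq, par_mul_par, one_pow]

lemma par_pow_conj_of_mem_epar {p : ZMod 2} {X : E n} (hX : X ∈ epar n p) :
    par n ^ p.val * X * par n ^ p.val = sgn p • X := by
  obtain rfl | rfl := zmod_two_cases p
  · rw [ZMod.val_zero, pow_zero, one_mul, mul_one, sgn_zero, one_smul]
  · rw [ZMod.val_one, pow_one, par_conj_of_mem_epar hX]

lemma edeg_le_epar (j : ℤ) : edeg n j ≤ epar n j := by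
  intro X hX q a ha
  rw [eq_sum_smul_mono a, map_sum]
  refine Submodule.sum_mem _ fun T _ => ?_
  rw [map_smul]
  by_cases hT : (T.card : ZMod 2) = q
  · have hXT := ldeg_le_lpar _ (hX _ _ (mono_mem_ldeg T))
    rw [Int.cast_add, Int.cast_natCast, hT] at hXT
    exact Submodule.smul_mem _ _ hXT
  · rw [ha T hT, zero_smul]
    exact Submodule.zero_mem _

/-! ### The superbracket with a homogeneous operator -/

/- For `X` of parity `p`, conjugating `Z` by `par n ^ p.val` produces the sign `(-1)^(|X||Z|)` on
every homogeneous component of `Z` at once. -/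
lemma sbL_of_mem_epar_left {p : ZMod 2} {X : E n} (hX : X ∈ epar n p) (Z : E n) :
    sbL n X Z = X * Z - par n ^ p.val * Z * par n ^ p.val * X := by
  have hconj := par_conj_of_mem_epar hX
  simp only [sbL, LinearMap.mk₂_apply, sbFun, hconj]
  obtain rfl | rfl := zmod_two_cases p
  · simp only [sgn_zero, ZMod.val_zero, pow_zero, one_smul, one_mul, mul_one, add_mul, sub_mul]
    module
  · simp only [sgn_one, ZMod.val_one, pow_one, mul_smul_comm, add_mul, sub_mul]
    module

lemma sbL_of_mem_epar_right {p : ZMod 2} {X : E n} (hX : X ∈ epar n p) (Z : E n) :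
    sbL n Z X = Z * X - X * (par n ^ p.val * Z * par n ^ p.val) := by
  have hconj := par_conj_of_mem_epar hX
  simp only [sbL, LinearMap.mk₂_apply, sbFun, hconj]
  obtain rfl | rfl := zmod_two_cases p
  · simp only [sgn_zero, ZMod.val_zero, pow_zero, one_smul, one_mul, mul_one, add_mul, sub_mul]
    module
  · simp only [sgn_one, ZMod.val_one, pow_one, add_mul, sub_mul, smul_mul_assoc]
    module

lemma sbL_swap_of_mem_epar {p : ZMod 2} {X : E n} (hX : X ∈ epar n p) (Z : E n) :
    sbL n X Z = -sgn p • (par n ^ p.val * sbL n Z X * par n ^ p.val) := by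
  have hsq := par_pow_mul_par_pow (n := n) p.val
  have hconj := par_pow_conj_of_mem_epar hX
  rw [sbL_of_mem_epar_left hX, sbL_of_mem_epar_right hX]
  set τ := par n ^ p.val
  have hZX : τ * (Z * X) * τ = sgn p • (τ * Z * τ * X) := by
    calc τ * (Z * X) * τ = τ * Z * (τ * τ) * X * τ := by rw [hsq, mul_one, mul_assoc τ Z X]
      _ = τ * Z * τ * (τ * X * τ) := by simp only [mul_assoc]
      _ = sgn p • (τ * Z * τ * X) := by rw [hconj, mul_smul_comm]
  have hXZ : τ * (X * (τ * Z * τ)) * τ = sgn p • (X * Z) := by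
    calc τ * (X * (τ * Z * τ)) * τ = τ * X * τ * Z * (τ * τ) := by simp only [mul_assoc]
      _ = sgn p • (X * Z) := by rw [hsq, mul_one, hconj, smul_mul_assoc]
  rw [mul_sub, sub_mul, hZX, hXZ]
  linear_combination (norm := module) -(sgn_mul_self p) • (X * Z - τ * Z * τ * X)

lemma sbL_eq_zero_symm {p : ZMod 2} {X Z : E n} (hX : X ∈ epar n p) (h : sbL n Z X = 0) :
    sbL n X Z = 0 := by
  rw [sbL_swap_of_mem_epar hX, h, mul_zero, zero_mul, smul_zero]

lemma apply_apply_of_sbL_eq_zero {p q : ZMod 2} {X Z : E n} {v : Lambda n} (hX : X ∈ epar n p)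
    (hXZ : sbL n X Z = 0) (hv : X v ∈ lpar n q) (S : Finset (Fin n)) :
    X (Z v) S = sgn q ^ p.val * msign S.card ^ p.val * Z (X v) S := by
  rw [sbL_of_mem_epar_left hX, sub_eq_zero] at hXZ
  have hZv := congrFun (DFunLike.congr_fun hXZ v) S
  simp only [Module.End.mul_apply] at hZv
  rw [hZv, par_pow_apply, par_pow_apply_of_mem_lpar hv, map_smul, Pi.smul_apply, smul_eq_mul]
  ring

lemma apply_apply_eq_zero_iff {p q : ZMod 2} {X Z : E n} {v : Lambda n} (hX : X ∈ epar n p)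
    (hXZ : sbL n X Z = 0) (hv : X v ∈ lpar n q) : X (Z v) = 0 ↔ Z (X v) = 0 := by
  simp only [funext_iff, apply_apply_of_sbL_eq_zero hX hXZ hv, Pi.zero_apply, mul_eq_zero,
    pow_ne_zero _ (sgn_ne_zero q), pow_ne_zero _ (msign_ne_zero _), false_or]

/-! ### Vector fields -/

lemma mulOp_apply (a b : Lambda n) (U : Finset (Fin n)) :
    mulOp n a b U = ∑ S ∈ U.powerset, msign (inversions n S (U \ S)) * a S * b (U \ S) := rfl

lemma mulOp_mono_empty : mulOp n (mono n ∅) = 1 := by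
  refine LinearMap.ext fun a => funext fun U => ?_
  rw [mulOp_apply, Finset.sum_eq_single ∅]
  · simp [mono, inversions, msign]
  · intro S _ hS
    simp [mono, hS]
  · simp

lemma mulOp_apply_mono_empty (a : Lambda n) : mulOp n a (mono n ∅) = a := by
  funext U
  rw [mulOp_apply, Finset.sum_eq_single U]
  · simp [mono, inversions, msign]
  · intro S hS hSU
    have hne : U \ S ≠ ∅ := fun h =>
      hSU ((Finset.mem_powerset.mp hS).antisymm (Finset.sdiff_eq_empty_iff_subset.mp h))
    simp [mono, hne]
  · simp

lemma pd_apply (i : Fin n) (a : Lambda n) (S : Finset (Fin n)) :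
    pd n i a S = if i ∈ S then 0 else msign (S.filter (· < i)).card * a (insert i S) := rfl

lemma pd_mono (i : Fin n) (T : Finset (Fin n)) :
    pd n i (mono n T) =
      if i ∈ T then msign ((T.erase i).filter (· < i)).card • mono n (T.erase i) else 0 := by
  funext S
  by_cases hiS : i ∈ S
  · have hne : S ≠ T.erase i := by
      rintro rfl
      exact Finset.notMem_erase i T hiS
    split_ifs <;> simp [pd_apply, mono, hiS, hne]
  · have hiff : insert i S = T ↔ i ∈ T ∧ S = T.erase i := by
      constructor
      · rintro rfl
        exact ⟨Finset.mem_insert_self i S, (Finset.erase_insert hiS).symm⟩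
      · rintro ⟨hiT, rfl⟩
        exact Finset.insert_erase hiT
    by_cases hS : S = T.erase i <;> split_ifs with hiT <;> simp_all [pd_apply, mono]

lemma pd_mono_empty (i : Fin n) : pd n i (mono n ∅) = 0 := by
  rw [pd_mono, if_neg (Finset.notMem_empty i)]

lemma pd_mono_singleton (i k : Fin n) :
    pd n i (mono n {k}) = if i = k then mono n ∅ else 0 := by
  rw [pd_mono]
  by_cases h : i = k
  · subst h
    simp [msign]
  · simp [h]

lemma pd_pd (i j : Fin n) (a : Lambda n) : pd n i (pd n j a) = -pd n j (pd n i a) := by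
  wlog hij : i < j generalizing i j
  · obtain rfl | hji := (not_lt.mp hij).eq_or_lt
    · funext S
      simp [pd_apply]
    · rw [this j i hji, neg_neg]
  funext S
  by_cases hi : i ∈ S <;> by_cases hj : j ∈ S <;> simp only [pd_apply, Pi.neg_apply, hi, hj,
    Finset.mem_insert, hij.ne, hij.ne', or_false, or_true, if_true, if_false, mul_zero, neg_zero]
  rw [Finset.filter_insert, Finset.filter_insert, if_pos hij, if_neg hij.not_gt,
    Finset.card_insert_of_notMem (by simp [hi]), Finset.insert_comm, msign, msign, msign]
  ring

lemma Wmap_eq_sum (F : Fin n → Lambda n) : Wmap n F = ∑ i, mulOp n (F i) * pd n i := rfl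

lemma Wmap_apply (F : Fin n → Lambda n) (v : Lambda n) :
    Wmap n F v = ∑ i, mulOp n (F i) (pd n i v) := by
  rw [Wmap_eq_sum, LinearMap.sum_apply]
  rfl

lemma Wmap_single (i : Fin n) (a : Lambda n) : Wmap n (Pi.single i a) = mulOp n a * pd n i := by
  rw [Wmap_eq_sum, Finset.sum_eq_single i]
  · rw [Pi.single_eq_same]
  · intro k _ hk
    rw [Pi.single_eq_of_ne hk, map_zero, zero_mul]
  · simp

lemma mulOp_mul_pd_mem_Wn (a : Lambda n) (i : Fin n) : mulOp n a * pd n i ∈ Wn n :=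
  ⟨Pi.single i a, Wmap_single i a⟩

lemma apply_mono_empty_of_mem_Wn {X : E n} (hX : X ∈ Wn n) : X (mono n ∅) = 0 := by
  obtain ⟨F, rfl⟩ := hX
  simp only [Wmap_apply, pd_mono_empty, map_zero, Finset.sum_const_zero]

lemma Wmap_mono_singleton (F : Fin n → Lambda n) (k : Fin n) : Wmap n F (mono n {k}) = F k := by
  simp [Wmap_apply, pd_mono_singleton, apply_ite (mulOp n _), mulOp_apply_mono_empty]

lemma mulOp_mul_pd_mono_singleton (a : Lambda n) (i k : Fin n) :
    (mulOp n a * pd n i) (mono n {k}) = if i = k then a else 0 := by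
  rw [Module.End.mul_apply, pd_mono_singleton, apply_ite (mulOp n a), mulOp_apply_mono_empty,
    map_zero]

lemma eq_smul_mono_empty_of_pd_eq_zero {a : Lambda n} (h : ∀ i, pd n i a = 0) :
    a = a ∅ • mono n ∅ := by
  funext S
  obtain rfl | ⟨i, hi⟩ := S.eq_empty_or_nonempty
  · simp [mono]
  · have hpd := congrFun (h i) (S.erase i)
    rw [pd_apply, if_neg (Finset.notMem_erase i S), Finset.insert_erase hi] at hpd
    have haS : a S = 0 := (mul_eq_zero.mp hpd).resolve_left (msign_ne_zero _)
    simp [mono, haS, Finset.ne_empty_of_mem hi]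

lemma Wmap_eq_sum_smul_pd {F : Fin n → Lambda n} (h : ∀ i k, pd n i (F k) = 0) :
    Wmap n F = ∑ k, F k ∅ • pd n k := by
  rw [Wmap_eq_sum]
  refine Finset.sum_congr rfl fun k _ => ?_
  conv_lhs => rw [eq_smul_mono_empty_of_pd_eq_zero (h · k)]
  rw [map_smul, smul_mul_assoc, mulOp_mono_empty, one_mul]

lemma coeff_eq_zero_of_sum_smul_pd_mono {c : Fin n → ℂ} {T : Finset (Fin n)}
    (h : (∑ k, c k • pd n k) (mono n T) = 0) {i : Fin n} (hi : i ∈ T) : c i = 0 := by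
  have hcoeff := congrFun h (T.erase i)
  rw [LinearMap.sum_apply, Finset.sum_apply, Finset.sum_eq_single i] at hcoeff
  · simpa [pd_mono, hi, mono, msign_ne_zero] using hcoeff
  · intro k _ hki
    by_cases hk : k ∈ T
    · have hne : T.erase i ≠ T.erase k := fun he =>
        Finset.notMem_erase k T (he ▸ Finset.mem_erase.mpr ⟨hki, hk⟩)
      simp [pd_mono, hk, mono, hne]
    · simp [pd_mono, hk]
  · simp

/-! ### Degrees -/

lemma mul_mem_edeg {d e : ℤ} {X Y : E n} (hX : X ∈ edeg n d) (hY : Y ∈ edeg n e) :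
    X * Y ∈ edeg n (d + e) := by
  intro m a ha
  simpa [add_comm d e, add_assoc] using hX _ _ (hY m a ha)

lemma par_mem_edeg : par n ∈ edeg n 0 := by
  intro m a ha S hS
  rw [par_apply, ha S (by simpa using hS), mul_zero]

lemma pd_mem_edeg (i : Fin n) : pd n i ∈ edeg n (-1) := by
  intro m a ha S hS
  rw [pd_apply]
  split_ifs with hi
  · rfl
  · have hcard : ((insert i S).card : ℤ) ≠ m := by
      rw [Finset.card_insert_of_notMem hi]
      push_cast
      omega
    rw [ha _ hcard, mul_zero]

lemma mulOp_mem_edeg {m : ℤ} {a : Lambda n} (ha : a ∈ ldeg n m) : mulOp n a ∈ edeg n m := by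
  intro p b hb U hU
  rw [mulOp_apply]
  refine Finset.sum_eq_zero fun S hS => ?_
  have hcard := Finset.card_sdiff_add_card_eq_card (Finset.mem_powerset.mp hS)
  by_cases hSm : (S.card : ℤ) = m
  · rw [hb (U \ S) (by omega), mul_zero]
  · rw [ha S hSm, mul_zero, zero_mul]

lemma mulOp_mul_pd_mem_edeg {m : ℤ} {a : Lambda n} (ha : a ∈ ldeg n m) (i : Fin n) :
    mulOp n a * pd n i ∈ edeg n (m - 1) :=
  mul_mem_edeg (mulOp_mem_edeg ha) (pd_mem_edeg i)

lemma DHmap_eq_sum (a : Lambda n) :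
    DHmap n a = ∑ i, mulOp n (pd n i (par n a)) * pd n (cidx n i) := rfl

lemma DHmap_mem_edeg {m : ℤ} {a : Lambda n} (ha : a ∈ ldeg n m) :
    DHmap n a ∈ edeg n (m - 2) := by
  rw [DHmap_eq_sum]
  refine Submodule.sum_mem _ fun i _ => ?_
  have hcoeff : pd n i (par n a) ∈ ldeg n (m - 1) := by
    simpa [sub_eq_add_neg] using pd_mem_edeg i _ _ (par_mem_edeg m a ha)
  have hterm := mulOp_mul_pd_mem_edeg hcoeff (cidx n i)
  rwa [show m - 1 - 1 = m - 2 by ring] at hterm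

/-! ### The graded algebras -/

lemma CC_mem_Wn : CC n ∈ Wn n := Submodule.sum_mem _ fun i _ => mulOp_mul_pd_mem_Wn _ i

lemma DHmap_mem_Wn (a : Lambda n) : DHmap n a ∈ Wn n := by
  rw [DHmap_eq_sum]
  exact Submodule.sum_mem _ fun _ _ => mulOp_mul_pd_mem_Wn _ _

lemma CT.prime_le_Wn (t : CT) : t.prime n ≤ Wn n := by
  have hCC : Submodule.span ℂ {CC n} ≤ Wn n := by
    rw [Submodule.span_singleton_le_iff_mem]
    exact CC_mem_Wn
  cases t
  case W => exact le_rfl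
  case S => exact sup_le LinearMap.map_le_range hCC
  case St =>
    rintro _ ⟨F, -, rfl⟩
    exact ⟨oneMScale n F, rfl⟩
  case H =>
    refine sup_le ?_ hCC
    rintro _ ⟨a, rfl⟩
    exact DHmap_mem_Wn a

lemma CT.algebra_le_prime (t : CT) : t.algebra n ≤ t.prime n := by
  cases t
  case W => exact le_rfl
  case S => exact le_sup_left
  case St => exact le_rfl
  case H => exact LinearMap.map_le_range.trans le_sup_left

lemma CT.grade_of_ne_St {t : CT} (ht : t ≠ .St) (j : ℤ) :
    t.grade n j = t.algebra n ⊓ edeg n j := by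
  cases t <;> first | rfl | exact absurd rfl ht

lemma CT.grade_St_neg_one :
    CT.grade .St n (-1) = Submodule.span ℂ (Set.range fun i => mulOp n (oneM n) * pd n i) := by
  rw [CT.grade, if_pos rfl]

lemma CT.grade_St_of_ne_neg_one {j : ℤ} (hj : j ≠ -1) :
    CT.grade .St n j = Stn n ⊓ edeg n j := by
  rw [CT.grade, if_neg hj]

lemma single_mem_divFree {i : Fin n} {a : Lambda n} (h : pd n i a = 0) :
    Pi.single i a ∈ divFree n := by
  rw [divFree, LinearMap.mem_ker, divMap, LinearMap.coe_mk, AddHom.coe_mk,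
    Finset.sum_eq_single i]
  · rw [Pi.single_eq_same, h]
  · intro k _ hk
    rw [Pi.single_eq_of_ne hk, map_zero]
  · simp

lemma mulOp_mul_pd_mem_Sn {i : Fin n} {a : Lambda n} (h : pd n i a = 0) :
    mulOp n a * pd n i ∈ Sn n :=
  ⟨_, single_mem_divFree h, Wmap_single i a⟩

lemma mulOp_oneM_mul_pd_mem_Stn (i : Fin n) : mulOp n (oneM n) * pd n i ∈ Stn n := by
  refine ⟨_, single_mem_divFree (pd_mono_empty i), ?_⟩
  have hscale : oneMScale n (Pi.single i (mono n ∅)) = Pi.single i (oneM n) := by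
    funext k
    obtain rfl | hk := eq_or_ne k i
    · simp [oneMScale, mulOp_apply_mono_empty]
    · simp [oneMScale, hk]
  rw [LinearMap.comp_apply, hscale, Wmap_single]

lemma DHmap_mono_mem_Hn {T : Finset (Fin n)} (hT : T ≠ Finset.univ) :
    DHmap n (mono n T) ∈ Hn n :=
  ⟨_, if_neg hT.symm, rfl⟩

lemma oneM_mem_lpar_zero (hn : Even n) : oneM n ∈ lpar n 0 := by
  have htop := mono_mem_lpar (Finset.univ : Finset (Fin n))
  rw [Finset.card_univ, Fintype.card_fin, hn.natCast_zmod_two] at htop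
  refine Submodule.sub_mem _ ?_ htop
  simpa using mono_mem_lpar (∅ : Finset (Fin n))

lemma mulOp_oneM_mul_pd_mem_epar (hn : Even n) (i : Fin n) :
    mulOp n (oneM n) * pd n i ∈ epar n 1 := by
  have hpd : pd n i ∈ epar n 1 := by
    simpa [ZMod.neg_eq_self_mod_two] using edeg_le_epar _ (pd_mem_edeg i)
  have htop : mulOp n (omegaTop n) * pd n i ∈ epar n 1 := by
    have h := edeg_le_epar _ (mulOp_mul_pd_mem_edeg (mono_mem_ldeg (n := n) Finset.univ) i)
    simpa [omegaTop, hn.natCast_zmod_two, ZMod.neg_eq_self_mod_two] using h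
  rw [oneM, map_sub, mulOp_mono_empty, sub_mul, one_mul]
  exact Submodule.sub_mem _ hpd htop

lemma CT.grade_le_algebra (t : CT) (j : ℤ) : t.grade n j ≤ t.algebra n := by
  by_cases ht : t = .St
  · subst ht
    by_cases hj : j = -1
    · subst hj
      rw [CT.grade_St_neg_one, Submodule.span_le]
      rintro _ ⟨i, rfl⟩
      exact mulOp_oneM_mul_pd_mem_Stn i
    · exact (CT.grade_St_of_ne_neg_one hj).trans_le inf_le_left
  · exact (CT.grade_of_ne_St ht j).trans_le inf_le_left

lemma CT.grade_le_epar {t : CT} (ht : t = .St → Even n) (j : ℤ) : t.grade n j ≤ epar n j := by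
  by_cases hSt : t = .St
  · subst hSt
    by_cases hj : j = -1
    · subst hj
      rw [CT.grade_St_neg_one, Submodule.span_le]
      rintro _ ⟨i, rfl⟩
      simpa [ZMod.neg_eq_self_mod_two] using mulOp_oneM_mul_pd_mem_epar (ht rfl) i
    · exact (CT.grade_St_of_ne_neg_one hj).trans_le (inf_le_right.trans (edeg_le_epar j))
  · exact (CT.grade_of_ne_St hSt j).trans_le (inf_le_right.trans (edeg_le_epar j))

/-! ### Supercentralizers of the extreme components -/

lemma pd_coeff_eq_zero_of_sbL_pd {F : Fin n → Lambda n} (h : ∀ i, sbL n (pd n i) (Wmap n F) = 0)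
    (i k : Fin n) : pd n i (F k) = 0 := by
  have hpar : pd n i (mono n {k}) ∈ lpar n 0 := by
    rw [pd_mono_singleton]
    split_ifs
    · simpa using mono_mem_lpar (∅ : Finset (Fin n))
    · exact Submodule.zero_mem _
  have hWpd : Wmap n F (pd n i (mono n {k})) = 0 := by
    rw [pd_mono_singleton]
    split_ifs
    · exact apply_mono_empty_of_mem_Wn ⟨F, rfl⟩
    · exact map_zero _
  rw [← Wmap_mono_singleton F k]
  exact (apply_apply_eq_zero_iff (edeg_le_epar _ (pd_mem_edeg i)) (h i) hpar).mpr hWpd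

lemma Wmap_eq_zero_of_pd_coeff_eq_zero {F : Fin n → Lambda n} (hF : ∀ i k, pd n i (F k) = 0)
    (h : ∀ i, ∃ T, i ∈ T ∧ Wmap n F (mono n T) = 0) : Wmap n F = 0 := by
  rw [Wmap_eq_sum_smul_pd hF] at h ⊢
  refine Finset.sum_eq_zero fun i _ => ?_
  obtain ⟨T, hiT, hT⟩ := h i
  rw [coeff_eq_zero_of_sum_smul_pd_mono hT hiT, zero_smul]

lemma Wmap_apply_apply_mono_singleton_eq_zero {F : Fin n → Lambda n}
    (hF : ∀ i k, pd n i (F k) = 0) {p q : ZMod 2} {X : E n} (hX : X ∈ Wn n) (hXp : X ∈ epar n p)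
    (hXF : sbL n X (Wmap n F) = 0) {k : Fin n} (hXk : X (mono n {k}) ∈ lpar n q) :
    Wmap n F (X (mono n {k})) = 0 := by
  refine (apply_apply_eq_zero_iff hXp hXF hXk).mp ?_
  rw [Wmap_mono_singleton, eq_smul_mono_empty_of_pd_eq_zero (hF · k), map_smul,
    apply_mono_empty_of_mem_Wn hX, smul_zero]

lemma cidx_cidx (i : Fin n) : cidx n (cidx n i) = i := by
  ext
  simp only [cidx]
  split_ifs <;> omega

lemma DHmap_mono_singleton_cidx (a : Lambda n) (k : Fin n) :
    DHmap n a (mono n {cidx n k}) = pd n k (par n a) := by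
  have hcidx : Function.Injective (cidx n) := Function.LeftInverse.injective cidx_cidx
  rw [DHmap_eq_sum, LinearMap.sum_apply, Finset.sum_eq_single k]
  · rw [mulOp_mul_pd_mono_singleton, if_pos rfl]
  · intro i _ hik
    rw [mulOp_mul_pd_mono_singleton, if_neg (hcidx.ne hik)]
  · simp

lemma DHmap_mono_singleton (i : Fin n) : DHmap n (mono n {i}) = -pd n (cidx n i) := by
  rw [DHmap_eq_sum, par_apply_of_mem_lpar (mono_mem_lpar {i}), Finset.sum_eq_single i]
  · rw [Finset.card_singleton, Nat.cast_one, sgn_one, map_smul, map_smul, pd_mono_singleton,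
      if_pos rfl, mulOp_mono_empty, smul_mul_assoc, one_mul]
    exact neg_one_smul ℂ (pd n (cidx n i))
  · intro k _ hk
    simp [pd_mono_singleton, hk]
  · simp

lemma pd_mem_Sn (i : Fin n) : pd n i ∈ Sn n := by
  simpa [mulOp_mono_empty] using mulOp_mul_pd_mem_Sn (pd_mono_empty i)

lemma pd_mem_Hn (hn : 2 ≤ n) (i : Fin n) : pd n i ∈ Hn n := by
  have hne : ({cidx n i} : Finset (Fin n)) ≠ Finset.univ := by
    rw [ne_eq, ← Finset.card_eq_iff_eq_univ, Finset.card_singleton, Fintype.card_fin]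
    omega
  have hmem := Submodule.neg_mem _ (DHmap_mono_mem_Hn hne)
  rwa [DHmap_mono_singleton, cidx_cidx, neg_neg] at hmem

lemma CT.pd_mem_grade_neg_one {t : CT} (ht : t ≠ .St) (hn : 2 ≤ n) (i : Fin n) :
    pd n i ∈ t.grade n (-1) := by
  rw [CT.grade_of_ne_St ht]
  refine ⟨?_, pd_mem_edeg i⟩
  cases t
  case W => exact CT.prime_le_Wn .S (CT.algebra_le_prime .S (pd_mem_Sn i))
  case S => exact pd_mem_Sn i
  case St => exact absurd rfl ht
  case H => exact pd_mem_Hn hn i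

lemma mulOp_omegaTop_mul_pd_mem_grade_xi (i : Fin n) :
    mulOp n (omegaTop n) * pd n i ∈ CT.grade .W n (CT.xi .W n) := by
  refine ⟨mulOp_mul_pd_mem_Wn _ i, ?_⟩
  simpa [CT.xi, omegaTop] using mulOp_mul_pd_mem_edeg (mono_mem_ldeg (n := n) Finset.univ) i

lemma mono_erase_mem_ldeg (j : Fin n) : mono n (Finset.univ.erase j) ∈ ldeg n (n - 1) := by
  have h := mono_mem_ldeg (Finset.univ.erase j)
  rwa [Finset.cast_card_erase_of_mem (Finset.mem_univ j), Finset.card_univ,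
    Fintype.card_fin] at h

lemma mulOp_mono_erase_mul_pd_mem_grade_xi (j : Fin n) :
    mulOp n (mono n (Finset.univ.erase j)) * pd n j ∈ CT.grade .S n (CT.xi .S n) := by
  have hpd : pd n j (mono n (Finset.univ.erase j)) = 0 := by
    rw [pd_mono, if_neg (Finset.notMem_erase j _)]
  refine ⟨mulOp_mul_pd_mem_Sn hpd, ?_⟩
  have hdeg := mulOp_mul_pd_mem_edeg (mono_erase_mem_ldeg j) j
  rwa [show (n : ℤ) - 1 - 1 = n - 2 by ring] at hdeg

lemma DHmap_mono_erase_mem_grade_xi (j : Fin n) :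
    DHmap n (mono n (Finset.univ.erase j)) ∈ CT.grade .H n (CT.xi .H n) := by
  refine ⟨DHmap_mono_mem_Hn fun h => Finset.notMem_erase j _ (h ▸ Finset.mem_univ j), ?_⟩
  have hdeg := DHmap_mem_edeg (mono_erase_mem_ldeg j)
  rwa [show (n : ℤ) - 1 - 2 = n - 3 by ring] at hdeg

lemma exists_DHmap_mono_apply_mono_singleton {T : Finset (Fin n)} {k : Fin n} (hk : k ∈ T) :
    ∃ c : ℂ, c ≠ 0 ∧ DHmap n (mono n T) (mono n {cidx n k}) = c • mono n (T.erase k) := by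
  refine ⟨sgn T.card * msign ((T.erase k).filter (· < k)).card,
    mul_ne_zero (sgn_ne_zero _) (msign_ne_zero _), ?_⟩
  rw [DHmap_mono_singleton_cidx, par_apply_of_mem_lpar (mono_mem_lpar T), map_smul, pd_mono,
    if_pos hk, smul_smul]

lemma CT.exists_mem_grade_xi_apply_mono_singleton {t : CT} (ht : t ≠ .St) (hn : 3 ≤ n)
    (i : Fin n) : ∃ X ∈ t.grade n (t.xi n), ∃ (k : Fin n) (T : Finset (Fin n)) (c : ℂ),
      i ∈ T ∧ c ≠ 0 ∧ X (mono n {k}) = c • mono n T := by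
  have : Nontrivial (Fin n) := Fin.nontrivial_iff_two_le.mpr (by omega)
  obtain ⟨j, hji⟩ := exists_ne i
  cases t
  case W =>
    refine ⟨_, mulOp_omegaTop_mul_pd_mem_grade_xi i, i, Finset.univ, 1, Finset.mem_univ i,
      one_ne_zero, ?_⟩
    rw [mulOp_mul_pd_mono_singleton, if_pos rfl, one_smul, omegaTop]
  case S =>
    refine ⟨_, mulOp_mono_erase_mul_pd_mem_grade_xi j, j, Finset.univ.erase j, 1,
      by simp [hji.symm], one_ne_zero, ?_⟩
    rw [mulOp_mul_pd_mono_singleton, if_pos rfl, one_smul]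
  case St => exact absurd rfl ht
  case H =>
    obtain ⟨k, hki, hkj⟩ := Fin.exists_ne_and_ne_of_two_lt i j hn
    obtain ⟨c, hc, hXk⟩ := exists_DHmap_mono_apply_mono_singleton
      (Finset.mem_erase.mpr ⟨hkj, Finset.mem_univ k⟩)
    exact ⟨_, DHmap_mono_erase_mem_grade_xi j, cidx n k, _, c, by simp [hji.symm, hki.symm], hc,
      hXk⟩

lemma eq_zero_of_sbL_grade_eq_zero_of_ne_St {t : CT} (ht : t ≠ .St) (hn : 3 ≤ n) {Z : E n}
    (hZ : Z ∈ Wn n) (hlow : ∀ X ∈ t.grade n (-1), sbL n X Z = 0)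
    (htop : ∀ X ∈ t.grade n (t.xi n), sbL n X Z = 0) : Z = 0 := by
  obtain ⟨F, rfl⟩ := hZ
  have hF := pd_coeff_eq_zero_of_sbL_pd fun i =>
    hlow _ (CT.pd_mem_grade_neg_one ht (by omega) i)
  refine Wmap_eq_zero_of_pd_coeff_eq_zero hF fun i => ?_
  obtain ⟨X, hX, k, T, c, hiT, hc, hXk⟩ :=
    CT.exists_mem_grade_xi_apply_mono_singleton ht hn i
  have hXW : X ∈ Wn n := t.prime_le_Wn (t.algebra_le_prime (t.grade_le_algebra _ hX))
  have hXp := CT.grade_le_epar (fun h => absurd h ht) _ hX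
  have hXk_par : X (mono n {k}) ∈ lpar n T.card :=
    hXk ▸ Submodule.smul_mem _ c (mono_mem_lpar T)
  have hFX := Wmap_apply_apply_mono_singleton_eq_zero hF hXW hXp (htop X hX) hXk_par
  rw [hXk, map_smul] at hFX
  exact ⟨T, hiT, (smul_eq_zero.mp hFX).resolve_left hc⟩

lemma mulOp_omegaTop_apply (a : Lambda n) : mulOp n (omegaTop n) a = a ∅ • omegaTop n := by
  funext U
  rw [mulOp_apply]
  by_cases hU : U = Finset.univ
  · subst hU
    rw [Finset.sum_eq_single Finset.univ]
    · simp [omegaTop, mono, inversions, msign]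
    · intro S _ hS
      simp [omegaTop, mono, hS]
    · simp
  · rw [Finset.sum_eq_zero]
    · simp [omegaTop, mono, hU]
    · intro S hS
      have hne : S ≠ Finset.univ := fun h =>
        hU (Finset.univ_subset_iff.mp (h ▸ Finset.mem_powerset.mp hS))
      simp [omegaTop, mono, hne]

lemma mulOp_oneM_apply (a : Lambda n) : mulOp n (oneM n) a = a - a ∅ • omegaTop n := by
  rw [oneM, map_sub, LinearMap.sub_apply, mulOp_mono_empty, mulOp_omegaTop_apply,
    Module.End.one_apply]

lemma omegaTop_apply_empty (hn : n ≠ 0) : omegaTop n ∅ = 0 := by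
  have : NeZero n := ⟨hn⟩
  exact if_neg Finset.univ_nonempty.ne_empty.symm

lemma mulOp_oneM_apply_empty (hn : n ≠ 0) (a : Lambda n) : mulOp n (oneM n) a ∅ = a ∅ := by
  simp [mulOp_oneM_apply, omegaTop_apply_empty hn]

lemma eq_zero_of_mulOp_oneM_eq_zero (hn : n ≠ 0) {a : Lambda n} (h : mulOp n (oneM n) a = 0) :
    a = 0 := by
  have ha : a ∅ = 0 := by rw [← mulOp_oneM_apply_empty hn a, h, Pi.zero_apply]
  simpa [mulOp_oneM_apply, ha] using h

lemma Wmap_oneM (F : Fin n → Lambda n) : Wmap n F (oneM n) = -Wmap n F (omegaTop n) := by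
  rw [oneM, map_sub, apply_mono_empty_of_mem_Wn ⟨F, rfl⟩, zero_sub]

lemma Wmap_oneM_apply_empty (hn : 2 ≤ n) (F : Fin n → Lambda n) : Wmap n F (oneM n) ∅ = 0 := by
  have hne (i : Fin n) : ({i} : Finset (Fin n)) ≠ Finset.univ := by
    rw [ne_eq, ← Finset.card_eq_iff_eq_univ, Finset.card_singleton, Fintype.card_fin]
    omega
  rw [Wmap_oneM, Pi.neg_apply, Wmap_apply, Finset.sum_apply]
  simp [mulOp_apply, pd_apply, omegaTop, mono, hne]

lemma pd_coeff_eq_zero_of_sbL_oneM_mul_pd (hn : 2 ≤ n) (heven : Even n) {F : Fin n → Lambda n}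
    (h : ∀ i, sbL n (mulOp n (oneM n) * pd n i) (Wmap n F) = 0) (i k : Fin n) :
    pd n i (F k) = 0 := by
  have hodd (i : Fin n) := mulOp_oneM_mul_pd_mem_epar heven i
  have hoff {i k : Fin n} (hik : i ≠ k) : pd n i (F k) = 0 := by
    have hXk : (mulOp n (oneM n) * pd n i) (mono n {k}) = 0 := by
      rw [mulOp_mul_pd_mono_singleton, if_neg hik]
    have hXF := (apply_apply_eq_zero_iff (q := 0) (hodd i) (h i)
      (hXk ▸ Submodule.zero_mem _)).mpr (by rw [hXk, map_zero])
    rw [Wmap_mono_singleton, Module.End.mul_apply] at hXF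
    exact eq_zero_of_mulOp_oneM_eq_zero (by omega) hXF
  obtain rfl | hik := eq_or_ne i k
  · have hXi : (mulOp n (oneM n) * pd n i) (mono n {i}) = oneM n := by
      rw [mulOp_mul_pd_mono_singleton, if_pos rfl]
    have hconst : pd n i (F i) ∅ = 0 := by
      have hXF := apply_apply_of_sbL_eq_zero (hodd i) (h i)
        (hXi.symm ▸ oneM_mem_lpar_zero heven) ∅
      rwa [hXi, Wmap_oneM_apply_empty hn, mul_zero, Wmap_mono_singleton, Module.End.mul_apply,
        mulOp_oneM_apply_empty (by omega)] at hXF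
    have hpd (j : Fin n) : pd n j (pd n i (F i)) = 0 := by
      obtain rfl | hji := eq_or_ne j i
      · exact self_eq_neg.mp (pd_pd j j _)
      · rw [pd_pd, hoff hji, map_zero, neg_zero]
    rw [eq_smul_mono_empty_of_pd_eq_zero hpd, hconst, zero_smul]
  · exact hoff hik

lemma eq_zero_of_sbL_oneM_mul_pd_eq_zero (hn : 2 ≤ n) (heven : Even n) {Z : E n} (hZ : Z ∈ Wn n)
    (h : ∀ i, sbL n (mulOp n (oneM n) * pd n i) Z = 0) : Z = 0 := by
  obtain ⟨F, rfl⟩ := hZ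
  have hF := pd_coeff_eq_zero_of_sbL_oneM_mul_pd hn heven h
  refine Wmap_eq_zero_of_pd_coeff_eq_zero hF fun i => ⟨Finset.univ, Finset.mem_univ i, ?_⟩
  have hXi : (mulOp n (oneM n) * pd n i) (mono n {i}) = oneM n := by
    rw [mulOp_mul_pd_mono_singleton, if_pos rfl]
  have hFX := Wmap_apply_apply_mono_singleton_eq_zero hF (mulOp_mul_pd_mem_Wn _ i)
    (mulOp_oneM_mul_pd_mem_epar heven i) (h i) (hXi.symm ▸ oneM_mem_lpar_zero heven)
  rwa [hXi, Wmap_oneM, neg_eq_zero] at hFX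

lemma CT.three_le_of_valid {t : CT} (ht : t.valid n) : 3 ≤ n := by
  cases t <;> simp only [CT.valid] at ht <;> omega

lemma CT.even_of_valid {t : CT} (ht : t.valid n) (hSt : t = .St) : Even n := by
  subst hSt
  exact ht.2

theorem CT.eq_zero_of_sbL_grade_eq_zero {t : CT} (hn : 3 ≤ n) (heven : t = .St → Even n)
    {Z : E n} (hZ : Z ∈ Wn n) (hlow : ∀ X ∈ t.grade n (-1), sbL n X Z = 0)
    (htop : ∀ X ∈ t.grade n (t.xi n), sbL n X Z = 0) : Z = 0 := by
  by_cases ht : t = .St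
  · subst ht
    refine eq_zero_of_sbL_oneM_mul_pd_eq_zero (by omega) (heven rfl) hZ fun i => hlow _ ?_
    rw [CT.grade_St_neg_one]
    exact Submodule.subset_span ⟨i, rfl⟩
  · exact eq_zero_of_sbL_grade_eq_zero_of_ne_St ht hn hZ hlow htop

end Centralizers

theorem superBider_vanish_ends_general {n : ℕ} {t : CT} (hn : 3 ≤ n) (heven : t = .St → Even n)
    {f : E n → E n → E n} {phi psi : E n → E n}
    (hmaps : ∀ x ∈ t.algebra n, phi x ∈ Wn n ∧ psi x ∈ Wn n)
    (hrepr : ∀ x ∈ t.algebra n, ∀ y ∈ t.algebra n,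
      f x y = sbL n (phi x) y ∧ f x y = sbL n x (psi y))
    (hvan : (∀ x ∈ t.grade n (-1) ⊔ t.grade n (t.xi n), phi x = 0) ∨
            (∀ x ∈ t.grade n (-1) ⊔ t.grade n (t.xi n), psi x = 0)) :
    ∀ x ∈ t.algebra n, ∀ y ∈ t.algebra n, f x y = 0 := by
  have halg {j : ℤ} {X : E n} (hX : X ∈ t.grade n j) := t.grade_le_algebra j hX
  intro x hx y hy
  obtain hphi | hpsi := hvan
  · have hbracket (X : E n) (hX : X ∈ t.algebra n) (hphiX : phi X = 0) : sbL n X (psi y) = 0 := by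
      rw [← (hrepr X hX y hy).2, (hrepr X hX y hy).1, hphiX, map_zero, LinearMap.zero_apply]
    have hpsi_y : psi y = 0 := CT.eq_zero_of_sbL_grade_eq_zero hn heven (hmaps y hy).2
      (fun X hX => hbracket X (halg hX) (hphi X (Submodule.mem_sup_left hX)))
      (fun X hX => hbracket X (halg hX) (hphi X (Submodule.mem_sup_right hX)))
    rw [(hrepr x hx y hy).2, hpsi_y, map_zero]
  · have hbracket (X : E n) (hX : X ∈ t.algebra n) (hpsiX : psi X = 0) : sbL n (phi x) X = 0 := by
      rw [← (hrepr x hx X hX).1, (hrepr x hx X hX).2, hpsiX, map_zero]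
    have hphi_x : phi x = 0 := CT.eq_zero_of_sbL_grade_eq_zero hn heven (hmaps x hx).1
      (fun X hX => sbL_eq_zero_symm (CT.grade_le_epar heven _ hX)
        (hbracket X (halg hX) (hpsi X (Submodule.mem_sup_left hX))))
      (fun X hX => sbL_eq_zero_symm (CT.grade_le_epar heven _ hX)
        (hbracket X (halg hX) (hpsi X (Submodule.mem_sup_right hX))))
    rw [(hrepr x hx y hy).1, hphi_x, map_zero, LinearMap.zero_apply]

/-- Let `f` be a homogeneous super-biderivation of a Cartan type Lie
superalgebra `L` with representing maps `φ_f, ψ_f : L → L'`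
(`f(x,y) = [φ_f(x), y] = [x, ψ_f(y)]`). If `φ_f` or `ψ_f` vanishes on
`L_{−1} ⊕ L_{ξ_L}`, then `f` is the zero map. -/
theorem superBider_vanish_ends (n : ℕ) (t : CT) (ht : t.valid n)
    (pf : ZMod 2) (f : E n →ₗ[ℂ] E n →ₗ[ℂ] E n)
    (hf : IsSuperBider n (t.algebra n) pf f)
    (phi psi : E n →ₗ[ℂ] E n)
    (hmaps : ∀ x ∈ t.algebra n, phi x ∈ t.prime n ∧ psi x ∈ t.prime n)
    (hrepr : ∀ x ∈ t.algebra n, ∀ y ∈ t.algebra n,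
      f x y = sbL n (phi x) y ∧ f x y = sbL n x (psi y))
    (hvan : (∀ x ∈ t.grade n (-1) ⊔ t.grade n (t.xi n), phi x = 0) ∨
            (∀ x ∈ t.grade n (-1) ⊔ t.grade n (t.xi n), psi x = 0)) :
    ∀ x ∈ t.algebra n, ∀ y ∈ t.algebra n, f x y = 0 := by
  exact superBider_vanish_ends_general (CT.three_le_of_valid ht) (CT.even_of_valid ht)
    (f := fun x y => f x y)
    (fun x hx => (hmaps x hx).imp (t.prime_le_Wn ·) (t.prime_le_Wn ·)) hrepr hvan

end CartanSuper
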